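/- arXiv:2305.19175 — 9 statements merged into one kernel-verified Lean document; each statement's English description precedes it below -/
import Mathlib

section
/- Let A be a finite type, let n : A → ℕ with n(a) ≥ 1 for all a, and set L := ∑_{a∈A} n(a). Let q : A → ℝ satisfy q(a) > 0 for all a and ∑_{a∈A} q(a) = 1. Then ∏_{a∈A} q(a)^{n(a)} = ∏_{a∈A} (n(a)/L)^{n(a)} holds if and only if q(a) = n(a)/L for every a ∈ A; i.e., q(a) = n(a)/L is the unique maximizer of ∏_a q(a)^{n(a)} among strictly positive probability vectors. -/
/-!
For `p, x ≥ 0` one has `x ^ p ≤ p ^ p * exp (x - p)`, strictly unless `x = p`: for `p > 0` this is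
`t ≤ exp (t - 1)` at `t = x / p`, raised to the power `p`, and for `p = 0` it is `1 ≤ exp x`. In the
product over all indices the exponential factors multiply to `exp (∑ x - ∑ p) ≤ 1`, so equality of
the products forces equality in every factor.
-/

theorem prod_lt_prod_of_nonneg_of_pos {ι R : Type*} [CommMonoidWithZero R] [PartialOrder R]
    [ZeroLEOneClass R] [PosMulStrictMono R] [Nontrivial R] {s : Finset ι} {f g : ι → R}
    (hf : ∀ i ∈ s, 0 ≤ f i) (hg : ∀ i ∈ s, 0 < g i) (hle : ∀ i ∈ s, f i ≤ g i)
    (hlt : ∃ i ∈ s, f i < g i) : ∏ i ∈ s, f i < ∏ i ∈ s, g i := by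
  classical
  obtain ⟨j, hj, hfg⟩ := hlt
  have hle' : ∏ i ∈ s.erase j, f i ≤ ∏ i ∈ s.erase j, g i :=
    Finset.prod_le_prod (fun i hi ↦ hf i (Finset.mem_of_mem_erase hi))
      fun i hi ↦ hle i (Finset.mem_of_mem_erase hi)
  have hpos : 0 < ∏ i ∈ s.erase j, g i :=
    Finset.prod_pos fun i hi ↦ hg i (Finset.mem_of_mem_erase hi)
  rw [← Finset.mul_prod_erase s f hj, ← Finset.mul_prod_erase s g hj]
  have := posMulStrictMono_iff_mulPosStrictMono.mp ‹PosMulStrictMono R›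
  exact mul_lt_mul_of_lt_of_le_of_nonneg_of_pos hfg hle' (hf j hj) hpos

theorem rpow_self_pos {p : ℝ} (hp : 0 ≤ p) : 0 < p ^ p := by
  rcases hp.eq_or_lt with rfl | hp
  · simp
  · exact Real.rpow_pos_of_pos hp p

theorem rpow_lt_rpow_self_mul_exp_sub {p x : ℝ} (hp : 0 ≤ p) (hx : 0 ≤ x) (hne : x ≠ p) :
    x ^ p < p ^ p * Real.exp (x - p) := by
  rcases hp.eq_or_lt with rfl | hp
  · simpa using hx.lt_of_ne' hne
  · have hratio : x / p < Real.exp (x / p - 1) := by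
      have hne' : x / p - 1 ≠ 0 := by rwa [sub_ne_zero, ne_eq, div_eq_one_iff_eq hp.ne']
      simpa only [sub_add_cancel] using Real.add_one_lt_exp hne'
    calc x ^ p = p ^ p * (x / p) ^ p := by
          rw [← Real.mul_rpow hp.le (by positivity), mul_div_cancel₀ x hp.ne']
      _ < p ^ p * Real.exp (x / p - 1) ^ p := by gcongr
      _ = p ^ p * Real.exp (x - p) := by
          rw [← Real.exp_mul, sub_mul, div_mul_cancel₀ x hp.ne', one_mul]

theorem rpow_le_rpow_self_mul_exp_sub {p x : ℝ} (hp : 0 ≤ p) (hx : 0 ≤ x) :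
    x ^ p ≤ p ^ p * Real.exp (x - p) := by
  rcases eq_or_ne x p with rfl | hne
  · simp
  · exact (rpow_lt_rpow_self_mul_exp_sub hp hx hne).le

section Products

variable {ι : Type*} {s : Finset ι} {p x : ι → ℝ}

theorem prod_rpow_lt_prod_rpow_self (hp : ∀ i ∈ s, 0 ≤ p i) (hx : ∀ i ∈ s, 0 ≤ x i)
    (hsum : ∑ i ∈ s, x i ≤ ∑ i ∈ s, p i) (hne : ∃ i ∈ s, x i ≠ p i) :
    ∏ i ∈ s, x i ^ p i < ∏ i ∈ s, p i ^ p i := by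
  obtain ⟨j, hj, hne⟩ := hne
  calc ∏ i ∈ s, x i ^ p i
      < ∏ i ∈ s, p i ^ p i * Real.exp (x i - p i) :=
        prod_lt_prod_of_nonneg_of_pos (fun i hi ↦ Real.rpow_nonneg (hx i hi) _)
          (fun i hi ↦ mul_pos (rpow_self_pos (hp i hi)) (Real.exp_pos _))
          (fun i hi ↦ rpow_le_rpow_self_mul_exp_sub (hp i hi) (hx i hi))
          ⟨j, hj, rpow_lt_rpow_self_mul_exp_sub (hp j hj) (hx j hj) hne⟩
    _ = (∏ i ∈ s, p i ^ p i) * Real.exp (∑ i ∈ s, x i - ∑ i ∈ s, p i) := by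
        rw [Finset.prod_mul_distrib, ← Real.exp_sum, Finset.sum_sub_distrib]
    _ ≤ ∏ i ∈ s, p i ^ p i :=
        mul_le_of_le_one_right (Finset.prod_nonneg fun i hi ↦ (rpow_self_pos (hp i hi)).le)
          (Real.exp_le_one_iff.mpr (sub_nonpos.mpr hsum))

theorem prod_rpow_eq_prod_rpow_self_iff (hp : ∀ i ∈ s, 0 ≤ p i) (hx : ∀ i ∈ s, 0 ≤ x i)
    (hsum : ∑ i ∈ s, x i ≤ ∑ i ∈ s, p i) :
    ∏ i ∈ s, x i ^ p i = ∏ i ∈ s, p i ^ p i ↔ ∀ i ∈ s, x i = p i := by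
  refine ⟨fun h ↦ ?_, fun h ↦ Finset.prod_congr rfl fun i hi ↦ by rw [h i hi]⟩
  by_contra! hne
  exact (prod_rpow_lt_prod_rpow_self hp hx hsum hne).ne h

theorem prod_rpow_mul_const (hx : ∀ i ∈ s, 0 ≤ x i) (c : ℝ) :
    ∏ i ∈ s, x i ^ (p i * c) = (∏ i ∈ s, x i ^ p i) ^ c := by
  rw [← Real.finsetProd_rpow s _ fun i hi ↦ Real.rpow_nonneg (hx i hi) _]
  exact Finset.prod_congr rfl fun i hi ↦ Real.rpow_mul (hx i hi) _ _

end Products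

theorem iid_sequence_probability_eq_max_iff_general {A : Type*} [Fintype A] (w : A → ℝ)
    (hw : ∀ a, 0 ≤ w a) (W : ℝ) (hW : W = ∑ a, w a) (hWpos : 0 < W) (q : A → ℝ)
    (hq : ∀ a, 0 ≤ q a) (hsum : ∑ a, q a ≤ 1) :
    (∏ a, q a ^ w a = ∏ a, (w a / W) ^ w a) ↔ ∀ a, q a = w a / W := by
  have hp : ∀ a, 0 ≤ w a / W := fun a ↦ div_nonneg (hw a) hWpos.le
  have hpsum : ∑ a, w a / W = 1 := by rw [← Finset.sum_div, ← hW, div_self hWpos.ne']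
  have hscale {y : A → ℝ} (hy : ∀ a, 0 ≤ y a) :
      ∏ a, y a ^ w a = (∏ a, y a ^ (w a / W)) ^ W := by
    simpa only [div_mul_cancel₀ _ hWpos.ne'] using
      prod_rpow_mul_const (p := fun a ↦ w a / W) (fun a _ ↦ hy a) W
  have hprod_nonneg {y : A → ℝ} (hy : ∀ a, 0 ≤ y a) : 0 ≤ ∏ a, y a ^ (w a / W) :=
    Finset.prod_nonneg fun a _ ↦ Real.rpow_nonneg (hy a) _
  rw [hscale hq, hscale hp, Real.rpow_left_inj (hprod_nonneg hq) (hprod_nonneg hp) hWpos.ne',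
    prod_rpow_eq_prod_rpow_self_iff (fun a _ ↦ hp a) (fun a _ ↦ hq a) (hsum.trans_eq hpsum.symm)]
  simp only [Finset.mem_univ, forall_const]

/-- Uniqueness of the maximizer: for strictly positive probability vectors `q` and exponents
`n a ≥ 1`, the product `∏ q a ^ n a` attains the value `∏ (n a / L) ^ n a` iff
`q a = n a / L` for every `a`. -/
theorem iid_sequence_probability_eq_max_iff {A : Type*} [Fintype A] (n : A → ℕ)
    (hn : ∀ a, 1 ≤ n a) (L : ℕ) (hL : L = ∑ a, n a) (q : A → ℝ) (hq : ∀ a, 0 < q a)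
    (hsum : ∑ a, q a = 1) :
    (∏ a, q a ^ n a = ∏ a, ((n a : ℝ) / (L : ℝ)) ^ n a) ↔
      ∀ a, q a = (n a : ℝ) / (L : ℝ) := by
  have hA : (Finset.univ : Finset A).Nonempty :=
    Finset.nonempty_of_sum_ne_zero (hsum.trans_ne one_ne_zero)
  have hLpos : 0 < L := hL ▸ Finset.sum_pos (fun a _ ↦ hn a) hA
  simpa only [Real.rpow_natCast] using iid_sequence_probability_eq_max_iff_general
    (fun a ↦ (n a : ℝ)) (fun a ↦ (n a).cast_nonneg) L (by rw [hL, Nat.cast_sum])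
    (Nat.cast_pos.mpr hLpos) q (fun a ↦ (hq a).le) hsum.le
end

section
/- Let I be a finite type, let x : I → ℂ^d be a family of vectors, let p : I → ℝ with p(i) > 0 for all i, and set ρ := ∑_{i∈I} p(i) • (x(i) ⬝ x(i)*), where x ⬝ x* denotes the outer product matrix with entries x(j) · conj(x(k)). Then for every i ∈ I there exists y ∈ ℂ^d with ρ.mulVec y = x(i); that is, every vector x(i) lies in the range of the linear map induced by ρ. -/
/-!
If `x i` were not in the range of `ρ`, some functional `star v ⬝ᵥ ·` would vanish on the range of
`ρ` but not at `x i`. In particular `0 = star v ⬝ᵥ ρ *ᵥ v = ∑ j, p j * |star v ⬝ᵥ x j|²`, a sum of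
nonnegative terms, which forces `star v ⬝ᵥ x i = 0`.
-/

open Matrix

section OuterProducts

variable {R m ι : Type*} [Fintype m] [Fintype ι]

theorem exists_mulVec_eq_of_forall_star_dotProduct_mulVec [Field R] [StarRing R]
    {M : Matrix m m R} {w : m → R}
    (h : ∀ v, star v ⬝ᵥ M *ᵥ v = 0 → star v ⬝ᵥ w = 0) : ∃ y, M *ᵥ y = w := by
  classical
  by_contra hw
  obtain ⟨f, hfw, hf⟩ := Submodule.exists_le_ker_of_notMem (show w ∉ M.mulVecLin.range from hw)
  obtain ⟨u, rfl⟩ := (dotProductEquiv R m).surjective f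
  have u_dotProduct_range (y : m → R) : u ⬝ᵥ M *ᵥ y = 0 := hf ⟨y, rfl⟩
  have u_dotProduct_w : u ⬝ᵥ w = 0 := by
    simpa only [star_star] using h (star u) (by rw [star_star, u_dotProduct_range])
  exact hfw u_dotProduct_w

theorem star_dotProduct_sum_smul_vecMulVec_star_mulVec [CommSemiring R] [StarRing R]
    (x : ι → m → R) (p : ι → R) (v : m → R) :
    star v ⬝ᵥ (∑ i, p i • vecMulVec (x i) (star (x i))) *ᵥ v =
      ∑ i, star v ⬝ᵥ x i * p i * star (star v ⬝ᵥ x i) := by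
  simp only [sum_mulVec, dotProduct_sum, smul_mulVec, dotProduct_smul, vecMulVec_mulVec,
    op_smul_eq_smul, smul_eq_mul]
  refine Finset.sum_congr rfl fun i _ => ?_
  rw [star_dotProduct (x i) v]
  ring

section StarOrderedField

variable [Field R] [PartialOrder R] [StarRing R] [StarOrderedRing R]

theorem star_dotProduct_eq_zero_of_sum_smul_vecMulVec_star {x : ι → m → R} {p : ι → R}
    (hp : ∀ i, 0 ≤ p i) {v : m → R}
    (hv : star v ⬝ᵥ (∑ i, p i • vecMulVec (x i) (star (x i))) *ᵥ v = 0)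
    {i : ι} (hi : p i ≠ 0) : star v ⬝ᵥ x i = 0 := by
  rw [star_dotProduct_sum_smul_vecMulVec_star_mulVec,
    Finset.sum_eq_zero_iff_of_nonneg fun j _ => star_right_conjugate_nonneg (hp j) _] at hv
  simpa [hi] using hv i (Finset.mem_univ i)

theorem mem_range_sum_outer_general (x : ι → m → R) {p : ι → R} (hp : ∀ i, 0 ≤ p i)
    {i : ι} (hi : p i ≠ 0) :
    ∃ y, (∑ j, p j • vecMulVec (x j) (star (x j))) *ᵥ y = x i :=
  exists_mulVec_eq_of_forall_star_dotProduct_mulVec fun _ hv =>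
    star_dotProduct_eq_zero_of_sum_smul_vecMulVec_star hp hv hi

end StarOrderedField

end OuterProducts

/-- Every vector `x i` lies in the range of `ρ = ∑ i, p i • |x i⟩⟨x i|` when all `p i > 0`. -/
theorem mem_range_sum_outer {d : ℕ} {I : Type*} [Fintype I] (x : I → Fin d → ℂ)
    (p : I → ℝ) (hp : ∀ i, 0 < p i) (ρ : Matrix (Fin d) (Fin d) ℂ)
    (hρ : ρ = ∑ i, p i • Matrix.vecMulVec (x i) (star (x i))) :
    ∀ i, ∃ y : Fin d → ℂ, ρ.mulVec y = x i := by
  intro i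
  open scoped ComplexOrder in
  simpa [hρ] using mem_range_sum_outer_general x (p := fun j => (p j : ℂ))
    (fun j => Complex.zero_le_real.mpr (hp j).le) (Complex.ofReal_ne_zero.mpr (hp i).ne')
end

section
/- Let n ≥ 1, d ≥ 1, and let φ : Fin n → (Fin d → ℂ) be a family of nonzero vectors. Define the product vector v ∈ ℂ^{(Fin n → Fin d)} by v(u) = ∏_{j : Fin n} φ(j)(u(j)). If v is invariant under all index permutations, i.e., v(u ∘ σ) = v(u) for every permutation σ of Fin n and every u : Fin n → Fin d, then there exist a vector ψ : Fin d → ℂ and a scalar c ∈ ℂ such that v(u) = c · ∏_{j} ψ(u(j)) for all u; equivalently, each φ(j) is a scalar multiple of a common vector ψ. -/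
/-!
If the product vector is zero, take `c = 0`. Otherwise choose an index tuple at which it does not
vanish. Changing only the entries of this tuple at `i` and `j`, the factors at all other positions
are common to both sides of the invariance under the transposition of `i` and `j` and cancel, so
the 2 × 2 minors of the pair `φ i`, `φ j` vanish. Hence the factors are pairwise proportional, and
the scalars can be pulled out of the product.
-/

/-- The product (tensor) vector `⊗ⱼ φ j`, encoded as the function of index tuples whose value at
`u` is its `u`-th entry. -/
def productVector {ι α M : Type*} [Fintype ι] [CommMonoid M] (φ : ι → α → M) : (ι → α) → M :=
  fun u => ∏ j, φ j (u j)

section CommMonoid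

variable {ι α M : Type*} [Fintype ι] [CommMonoid M]

lemma productVector_smul_const (c : ι → M) (ψ : α → M) :
    productVector (fun j => c j • ψ) = (∏ j, c j) • productVector fun _ : ι => ψ :=
  funext fun _ => Finset.prod_mul_distrib

lemma productVector_apply_eq_mul_prod_compl [DecidableEq ι] (φ : ι → α → M) {i j : ι}
    (hij : i ≠ j) (u : ι → α) :
    productVector φ u = φ i (u i) * φ j (u j) * ∏ k ∈ {i, j}ᶜ, φ k (u k) := by
  rw [productVector, ← Finset.prod_mul_prod_compl {i, j}, Finset.prod_pair hij]

lemma productVector_comp_swap_apply [DecidableEq ι] (φ : ι → α → M) {i j : ι}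
    (hij : i ≠ j) (u : ι → α) :
    productVector φ (u ∘ Equiv.swap i j) =
      φ i (u j) * φ j (u i) * ∏ k ∈ {i, j}ᶜ, φ k (u k) := by
  have hrest : ∏ k ∈ {i, j}ᶜ, φ k (u (Equiv.swap i j k)) = ∏ k ∈ {i, j}ᶜ, φ k (u k) := by
    refine Finset.prod_congr rfl fun k hk => ?_
    obtain ⟨hki, hkj⟩ : k ≠ i ∧ k ≠ j := by simpa using hk
    rw [Equiv.swap_apply_of_ne_of_ne hki hkj]
  simp only [productVector_apply_eq_mul_prod_compl φ hij, Function.comp_apply,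
    Equiv.swap_apply_left, Equiv.swap_apply_right, hrest]

end CommMonoid

lemma mul_apply_comm_of_productVector_comp_swap {ι α M : Type*} [Fintype ι] [DecidableEq ι]
    [CommMonoidWithZero M] [IsCancelMulZero M] {φ : ι → α → M} (hφ : productVector φ ≠ 0)
    {i j : ι} (hswap : ∀ u, productVector φ (u ∘ Equiv.swap i j) = productVector φ u) (a b : α) :
    φ i b * φ j a = φ i a * φ j b := by
  rcases eq_or_ne i j with rfl | hij
  · exact mul_comm _ _
  obtain ⟨w, hw⟩ := Function.ne_iff.mp hφ
  let u := Function.update (Function.update w i a) j b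
  have hui : u i = a := by simp [u, hij]
  have huj : u j = b := by simp [u]
  have hrest : ∏ k ∈ {i, j}ᶜ, φ k (u k) ≠ 0 := by
    have hcongr : ∏ k ∈ {i, j}ᶜ, φ k (u k) = ∏ k ∈ {i, j}ᶜ, φ k (w k) := by
      refine Finset.prod_congr rfl fun k hk => ?_
      obtain ⟨hki, hkj⟩ : k ≠ i ∧ k ≠ j := by simpa using hk
      simp [u, hki, hkj]
    rw [productVector_apply_eq_mul_prod_compl φ hij] at hw
    exact hcongr ▸ right_ne_zero_of_mul hw
  have hu := hswap u
  rw [productVector_comp_swap_apply φ hij, productVector_apply_eq_mul_prod_compl φ hij,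
    hui, huj] at hu
  exact mul_right_cancel₀ hrest hu

section CommGroupWithZero

variable {ι α K : Type*} [Fintype ι] [CommGroupWithZero K] {φ : ι → α → K}

lemma exists_eq_smul_of_productVector_comp_swap [DecidableEq ι] (hφ : productVector φ ≠ 0)
    {i j : ι} (hswap : ∀ u, productVector φ (u ∘ Equiv.swap i j) = productVector φ u) :
    ∃ c : K, φ j = c • φ i := by
  obtain ⟨w, hw⟩ := Function.ne_iff.mp hφ
  have hwi : φ i (w i) ≠ 0 := fun h => hw (Finset.prod_eq_zero (Finset.mem_univ i) h)
  refine ⟨φ j (w i) / φ i (w i), funext fun a => ?_⟩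
  rw [Pi.smul_apply, smul_eq_mul, div_mul_eq_mul_div, eq_div_iff hwi, mul_comm,
    mul_apply_comm_of_productVector_comp_swap hφ hswap a (w i), mul_comm]

theorem symmetric_product_vector_is_tensor_power_general
    (hsym : ∀ (σ : Equiv.Perm ι) (u : ι → α), productVector φ (u ∘ σ) = productVector φ u) :
    ∃ (ψ : α → K) (c : K), productVector φ = c • productVector fun _ : ι => ψ := by
  classical
  by_cases hφ : productVector φ = 0
  · exact ⟨0, 0, by rw [hφ, zero_smul]⟩
  obtain ⟨ψ, hψ⟩ : ∃ ψ : α → K, ∀ j, ∃ c : K, φ j = c • ψ := by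
    rcases isEmpty_or_nonempty ι with _ | ⟨⟨i⟩⟩
    · exact ⟨0, isEmptyElim⟩
    · exact ⟨φ i, fun j => exists_eq_smul_of_productVector_comp_swap hφ (hsym (Equiv.swap i j))⟩
  choose c hc using hψ
  exact ⟨ψ, ∏ j, c j, by rw [funext hc, productVector_smul_const]⟩

end CommGroupWithZero

/-- A nonzero product (tensor) vector of nonzero factors lying in the symmetric subspace
is (a scalar multiple of) a tensor power of a single vector. -/
theorem symmetric_product_vector_is_tensor_power {n d : ℕ} (hn : 1 ≤ n) (hd : 1 ≤ d)
    (φ : Fin n → Fin d → ℂ) (hφ : ∀ j, φ j ≠ 0)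
    (v : (Fin n → Fin d) → ℂ) (hv : ∀ u, v u = ∏ j, φ j (u j))
    (hsym : ∀ (σ : Equiv.Perm (Fin n)) (u : Fin n → Fin d), v (u ∘ σ) = v u) :
    ∃ (ψ : Fin d → ℂ) (c : ℂ), ∀ u, v u = c * ∏ j, ψ (u j) := by
  obtain rfl : v = productVector φ := funext hv
  obtain ⟨ψ, c, h⟩ := symmetric_product_vector_is_tensor_power_general hsym
  exact ⟨ψ, c, congrFun h⟩
end

section
/- Let d ≥ 1, L ≥ 2, let I be a finite type, p : I → ℝ with p(i) > 0 and ∑_i p(i) = 1, and let φ : I → (Fin d × Fin d → ℂ) be unit vectors. Let Φ ∈ Matrix (Fin L → Fin d × Fin d) (Fin L → Fin d × Fin d) ℂ be Φ_{v,v'} = ∑_i p(i) ∏_ℓ φ(i)(v(ℓ)) · conj(φ(i)(v'(ℓ))) (a convex combination of L-fold tensor powers of pure states on ℂ^d ⊗ ℂ^d). Then the following are equivalent: (1) the partial trace of Φ over the output factor of the first party satisfies Tr_{O₁}[Φ] = (1/d) · 1_{I₁} ⊗ Tr_{A₁}[Φ], i.e., for all j, j' ∈ Fin d and all w, w' : Fin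 (L−1) → Fin d × Fin d, ∑_{o∈Fin d} Φ_{(cons(j,o) w),(cons(j',o) w')} = (δ_{j,j'}/d) · ∑_{j''∈Fin d, o∈Fin d} Φ_{(cons(j'',o) w),(cons(j'',o) w')}; (2) for every i ∈ I, the reduced state of |φ(i)⟩⟨φ(i)| over the output factor is maximally mixed: ∑_{o∈Fin d} φ(i)(j,o) · conj(φ(i)(j',o)) = δ_{j,j'}/d for all j, j' ∈ Fin d. -/
/-!
Write `R i` for the reduction of the component `ρ i` to the input factor of one party, and `σ` for
the required reduced state (`1 / d` in the theorem). The first-party constraint says that, for each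
entry `(j, j')`, the combination of the tensor powers of the `ρ i` on the remaining parties with
coefficients `p i * (R i j j' - σ j j')` vanishes. Tracing out all but one of these parties gives
`∑ i, p i * (R i j j' - σ j j') • ρ i = 0`. The trace of this identity and its `(j', j)` reduced
entry, which involves `R i j' j = conj (R i j j')`, combine to
`∑ i, p i * ‖R i j j' - σ j j'‖ ^ 2 = 0`, so `R i = σ` for every `i`.
-/

open Matrix ComplexConjugate

section PartialTrace

variable {α β R : Type*} [Fintype β]

/-- The partial trace of an operator on a bipartite system over its second factor. -/
def partialTraceRight [CommSemiring R] : Matrix (α × β) (α × β) R →ₗ[R] Matrix α α R where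
  toFun A := of fun j j' => ∑ o, A (j, o) (j', o)
  map_add' A B := by ext; simp [Finset.sum_add_distrib]
  map_smul' c A := by ext; simp [Finset.mul_sum]

lemma partialTraceRight_apply [CommSemiring R] (A : Matrix (α × β) (α × β) R) (j j' : α) :
    partialTraceRight A j j' = ∑ o, A (j, o) (j', o) :=
  rfl

lemma partialTraceRight_conjTranspose [CommSemiring R] [StarRing R]
    (A : Matrix (α × β) (α × β) R) : partialTraceRight Aᴴ = (partialTraceRight A)ᴴ := by
  ext j j'
  simp only [partialTraceRight_apply, conjTranspose_apply, star_sum]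

lemma trace_partialTraceRight [CommSemiring R] [Fintype α] (A : Matrix (α × β) (α × β) R) :
    trace (partialTraceRight A) = trace A :=
  (Fintype.sum_prod_type fun x => A x x).symm

end PartialTrace

section TensorPower

variable {γ I R : Type*} [CommSemiring R] {m : ℕ}

/-- The tensor power `ρ^{⊗n}`, with tuples indexing the product basis of the `n` parties. -/
def tensorPower (ρ : Matrix γ γ R) (n : ℕ) : Matrix (Fin n → γ) (Fin n → γ) R :=
  of fun v v' => ∏ ℓ, ρ (v ℓ) (v' ℓ)

lemma trace_tensorPower [Fintype γ] (ρ : Matrix γ γ R) (n : ℕ) :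
    trace (tensorPower ρ n) = trace ρ ^ n :=
  (Fintype.sum_pow (fun x => ρ x x) n).symm

/-- The operator on the first party obtained from an `(m + 1)`-party operator by fixing the
row index `w` and the column index `w'` of the remaining parties. -/
def firstPartyBlock (w w' : Fin m → γ) :
    Matrix (Fin (m + 1) → γ) (Fin (m + 1) → γ) R →ₗ[R] Matrix γ γ R where
  toFun Φ := of fun x x' => Φ (Fin.cons x w) (Fin.cons x' w')
  map_add' _ _ := rfl
  map_smul' _ _ := rfl

lemma firstPartyBlock_apply (w w' : Fin m → γ) (Φ : Matrix (Fin (m + 1) → γ) (Fin (m + 1) → γ) R)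
    (x x' : γ) : firstPartyBlock w w' Φ x x' = Φ (Fin.cons x w) (Fin.cons x' w') :=
  rfl

lemma firstPartyBlock_tensorPower_succ (ρ : Matrix γ γ R) (w w' : Fin m → γ) :
    firstPartyBlock w w' (tensorPower ρ (m + 1)) = tensorPower ρ m w w' • ρ := by
  ext x x'
  rw [firstPartyBlock_apply]
  simp [tensorPower, Fin.prod_univ_succ, mul_comm]

lemma sum_firstPartyBlock_tensorPower_succ [Fintype γ] (ρ : Matrix γ γ R) (m : ℕ) :
    ∑ u : Fin m → γ, firstPartyBlock u u (tensorPower ρ (m + 1)) = trace ρ ^ m • ρ := by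
  rw [← trace_tensorPower, trace, Finset.sum_smul]
  exact Finset.sum_congr rfl fun u _ => firstPartyBlock_tensorPower_succ ρ u u

lemma sum_smul_eq_zero_of_sum_smul_tensorPower_eq_zero [Fintype γ] [Fintype I]
    {ρ : I → Matrix γ γ R} (htr : ∀ i, trace (ρ i) = 1) {n : ℕ} (hn : n ≠ 0) {c : I → R}
    (h : ∑ i, c i • tensorPower (ρ i) n = 0) : ∑ i, c i • ρ i = 0 := by
  obtain ⟨m, rfl⟩ := Nat.exists_eq_succ_of_ne_zero hn
  calc ∑ i, c i • ρ i
    _ = ∑ i, c i • ∑ u, firstPartyBlock u u (tensorPower (ρ i) (m + 1)) := by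
      simp only [sum_firstPartyBlock_tensorPower_succ, htr, one_pow, one_smul]
    _ = ∑ u, firstPartyBlock u u (∑ i, c i • tensorPower (ρ i) (m + 1)) := by
      simp only [Finset.smul_sum, map_sum, map_smul]
      exact Finset.sum_comm
    _ = 0 := by simp only [h, map_zero, Finset.sum_const_zero]

end TensorPower

lemma partialTraceRight_firstPartyBlock_eq_iff {α β I R : Type*} [Fintype α] [Fintype β]
    [Fintype I] [CommRing R] {ρ : I → Matrix (α × β) (α × β) R} (htr : ∀ i, trace (ρ i) = 1)
    (c : I → R) {m : ℕ} (w w' : Fin m → α × β) (j j' : α) (s : R) :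
    partialTraceRight (firstPartyBlock w w' (∑ i, c i • tensorPower (ρ i) (m + 1))) j j' =
        s * trace (firstPartyBlock w w' (∑ i, c i • tensorPower (ρ i) (m + 1))) ↔
      (∑ i, (c i * (partialTraceRight (ρ i) j j' - s)) • tensorPower (ρ i) m) w w' = 0 := by
  simp only [map_sum, map_smul, firstPartyBlock_tensorPower_succ, trace_sum, trace_smul, htr,
    Matrix.sum_apply, Matrix.smul_apply, smul_eq_mul, Finset.mul_sum]
  rw [← sub_eq_zero, ← Finset.sum_sub_distrib]
  refine Eq.congr_left (Finset.sum_congr rfl fun i _ => ?_)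
  ring

section RCLike

variable {α β I 𝕜 : Type*} [Fintype I] [RCLike 𝕜]

lemma eq_of_weighted_sum_sub_eq_zero {p : I → ℝ} (hp : ∀ i, 0 < p i) {x : I → 𝕜} {s : 𝕜}
    (hmean : ∑ i, (p i : 𝕜) * (x i - s) = 0)
    (hcov : ∑ i, (p i : 𝕜) * (x i - s) * conj (x i) = 0) (i : I) : x i = s := by
  have hvar : ∑ i, (p i : 𝕜) * (x i - s) * conj (x i - s) = 0 := by
    simp only [map_sub, mul_sub _ _ (conj s), Finset.sum_sub_distrib, ← Finset.sum_mul, hmean,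
      hcov, zero_mul, sub_zero]
  have hnorm : ∑ i, p i * ‖x i - s‖ ^ 2 = 0 := by
    simp only [mul_assoc, RCLike.mul_conj] at hvar
    exact_mod_cast hvar
  have hterm : p i * ‖x i - s‖ ^ 2 = 0 :=
    (Finset.sum_eq_zero_iff_of_nonneg fun k _ => mul_nonneg (hp k).le (sq_nonneg _)).1 hnorm i
      (Finset.mem_univ i)
  simpa [(hp i).ne', sub_eq_zero] using hterm

variable [Fintype α] [Fintype β]

lemma partialTraceRight_eq_of_sum_smul_eq_zero {p : I → ℝ} (hp : ∀ i, 0 < p i)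
    {ρ : I → Matrix (α × β) (α × β) 𝕜} (hρ : ∀ i, (ρ i).IsHermitian)
    (htr : ∀ i, trace (ρ i) = 1) {j j' : α} {s : 𝕜}
    (h : ∑ i, ((p i : 𝕜) * (partialTraceRight (ρ i) j j' - s)) • ρ i = 0) (i : I) :
    partialTraceRight (ρ i) j j' = s := by
  have hstar (k : I) : partialTraceRight (ρ k) j' j = conj (partialTraceRight (ρ k) j j') := by
    conv_lhs => rw [← (hρ k).eq, partialTraceRight_conjTranspose, conjTranspose_apply]
    rfl
  refine eq_of_weighted_sum_sub_eq_zero hp (x := fun k => partialTraceRight (ρ k) j j') ?_ ?_ i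
  · simpa only [trace_sum, trace_smul, htr, smul_eq_mul, mul_one, trace_zero] using
      congr_arg trace h
  · simpa only [map_sum, map_smul, map_zero, Matrix.sum_apply, Matrix.smul_apply,
      Matrix.zero_apply, smul_eq_mul, hstar] using congr_fun₂ (congr_arg partialTraceRight h) j' j

theorem first_party_TP_iff_components_TP_general {m : ℕ} (hm : 1 ≤ m) {p : I → ℝ}
    (hp : ∀ i, 0 < p i) {ρ : I → Matrix (α × β) (α × β) 𝕜} (hρ : ∀ i, (ρ i).IsHermitian)
    (htr : ∀ i, trace (ρ i) = 1) (σ : Matrix α α 𝕜)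
    {Φ : Matrix (Fin (m + 1) → α × β) (Fin (m + 1) → α × β) 𝕜}
    (hΦ : ∀ v v', Φ v v' = ∑ i, (p i : 𝕜) * ∏ ℓ, ρ i (v ℓ) (v' ℓ)) :
    (∀ (j j' : α) (w w' : Fin m → α × β),
        ∑ o, Φ (Fin.cons (j, o) w) (Fin.cons (j', o) w') =
          σ j j' * ∑ j'', ∑ o, Φ (Fin.cons (j'', o) w) (Fin.cons (j'', o) w')) ↔
      ∀ i j j', ∑ o, ρ i (j, o) (j', o) = σ j j' := by
  have hΦ' : Φ = ∑ i, (p i : 𝕜) • tensorPower (ρ i) (m + 1) := by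
    ext v v'
    simp only [hΦ, Matrix.sum_apply, Matrix.smul_apply, tensorPower, of_apply, smul_eq_mul]
  have hblock (j j' : α) (w w' : Fin m → α × β) :
      ∑ o, Φ (Fin.cons (j, o) w) (Fin.cons (j', o) w') =
          σ j j' * ∑ j'', ∑ o, Φ (Fin.cons (j'', o) w) (Fin.cons (j'', o) w') ↔
        (∑ i, ((p i : 𝕜) * (partialTraceRight (ρ i) j j' - σ j j')) • tensorPower (ρ i) m) w w'
          = 0 := by
    rw [← partialTraceRight_firstPartyBlock_eq_iff htr, ← hΦ', ← trace_partialTraceRight]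
    rfl
  simp only [hblock]
  constructor
  · intro h i j j'
    exact partialTraceRight_eq_of_sum_smul_eq_zero hp hρ htr
      (sum_smul_eq_zero_of_sum_smul_tensorPower_eq_zero htr (Nat.one_le_iff_ne_zero.1 hm)
        (Matrix.ext (h j j'))) i
  · intro h j j' w w'
    simp only [partialTraceRight_apply, h, sub_self, mul_zero, zero_smul, Finset.sum_const_zero,
      Matrix.zero_apply]

end RCLike

section PureState

variable {α : Type*}

lemma isHermitian_vecMulVec_star {R : Type*} [Mul R] [StarMul R] (ψ : α → R) :
    (vecMulVec ψ (star ψ)).IsHermitian := by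
  rw [IsHermitian, conjTranspose_vecMulVec, star_star]

lemma trace_vecMulVec_star_eq_one [Fintype α] {𝕜 : Type*} [RCLike 𝕜] {ψ : α → 𝕜}
    (hψ : ∑ x, ‖ψ x‖ ^ 2 = 1) : trace (vecMulVec ψ (star ψ)) = 1 := by
  simp only [trace, diag_apply, vecMulVec_apply, Pi.star_apply, RCLike.star_def, RCLike.mul_conj]
  exact_mod_cast hψ

end PureState

/-- For a symmetric fully separable multipartite state (a convex combination of `L`-fold
tensor powers of pure states on `ℂ^d ⊗ ℂ^d`, with `L = m + 1 ≥ 2`), the partial-trace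
(trace-preservation) constraint on the first party holds iff every pure component has
maximally mixed reduced state on the output factor. -/
theorem first_party_TP_iff_components_TP {d : ℕ} (hd : 1 ≤ d) {m : ℕ} (hm : 1 ≤ m)
    {I : Type*} [Fintype I] (p : I → ℝ) (hp : ∀ i, 0 < p i) (hpsum : ∑ i, p i = 1)
    (φ : I → Fin d × Fin d → ℂ) (hφ : ∀ i, ∑ x, ‖φ i x‖ ^ 2 = 1)
    (Φ : Matrix (Fin (m + 1) → Fin d × Fin d) (Fin (m + 1) → Fin d × Fin d) ℂ)
    (hΦ : ∀ v v', Φ v v' =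
      ∑ i, (p i : ℂ) * ∏ ℓ, φ i (v ℓ) * (starRingEnd ℂ) (φ i (v' ℓ))) :
    (∀ (j j' : Fin d) (w w' : Fin m → Fin d × Fin d),
        ∑ o : Fin d, Φ (Fin.cons (j, o) w) (Fin.cons (j', o) w') =
          (if j = j' then 1 else 0) / (d : ℂ) *
            ∑ j'' : Fin d, ∑ o : Fin d, Φ (Fin.cons (j'', o) w) (Fin.cons (j'', o) w')) ↔
      (∀ (i : I) (j j' : Fin d),
        ∑ o : Fin d, φ i (j, o) * (starRingEnd ℂ) (φ i (j', o)) =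
          (if j = j' then 1 else 0) / (d : ℂ)) :=
  first_party_TP_iff_components_TP_general hm hp (fun i => isHermitian_vecMulVec_star (φ i))
    (fun i => trace_vecMulVec_star_eq_one (hφ i)) (fun j j' => (if j = j' then 1 else 0) / d) hΦ
end

section
/- Let I be a finite type, let E : I → Matrix (Fin d) (Fin d) ℂ, and let p : I → ℝ with p(i) > 0 for all i. If the Kronecker sum ∑_{i∈I} p(i) • (E(i) ⊗ₖ E(i)*) = 0, where E(i)* is the conjugate transpose of E(i) and ⊗ₖ is the Kronecker product (a d²×d² matrix), then E(i) = 0 for every i ∈ I. -/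
open Matrix Kronecker

theorem kronecker_conjTranspose_apply_swap {m n R : Type*} [Mul R] [Star R]
    (A : Matrix m n R) (a : m) (b : n) :
    (A ⊗ₖ Aᴴ) (a, b) (b, a) = A a b * star (A a b) :=
  rfl

section StarOrderedRing

variable {ι 𝕜 R : Type*} [Zero 𝕜] [PartialOrder 𝕜]
  [NonUnitalSemiring R] [PartialOrder R] [StarRing R] [StarOrderedRing R] [NoZeroDivisors R]
  [SMulWithZero 𝕜 R] [PosSMulStrictMono 𝕜 R] {s : Finset ι} {p : ι → 𝕜}

theorem eq_zero_of_smul_mul_star_self_eq_zero {c : 𝕜} (hc : 0 < c) {x : R}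
    (h : c • (x * star x) = 0) : x = 0 := by
  by_contra hx
  have hpos : 0 < x * star x :=
    (mul_star_self_nonneg x).lt_of_ne' (mul_ne_zero hx (star_ne_zero.mpr hx))
  exact (smul_pos hc hpos).ne' h

theorem eq_zero_of_sum_smul_mul_star_self_eq_zero {x : ι → R} (hp : ∀ i ∈ s, 0 < p i)
    (h : ∑ i ∈ s, p i • (x i * star (x i)) = 0) : ∀ i ∈ s, x i = 0 := by
  have hnonneg : ∀ i ∈ s, 0 ≤ p i • (x i * star (x i)) := fun i hi =>
    smul_nonneg (hp i hi).le (mul_star_self_nonneg (x i))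
  exact fun i hi =>
    eq_zero_of_smul_mul_star_self_eq_zero (hp i hi)
      ((Finset.sum_eq_zero_iff_of_nonneg hnonneg).mp h i hi)

theorem eq_zero_of_sum_kronecker_conjTranspose_eq_zero_general {m n : Type*}
    {E : ι → Matrix m n R} (hp : ∀ i ∈ s, 0 < p i)
    (h : ∑ i ∈ s, p i • (E i ⊗ₖ (E i)ᴴ) = 0) : ∀ i ∈ s, E i = 0 := by
  intro i hi
  ext a b
  have hentry : ∑ j ∈ s, p j • (E j a b * star (E j a b)) = 0 := by
    simpa only [Matrix.sum_apply, Matrix.smul_apply, kronecker_conjTranspose_apply_swap,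
      Matrix.zero_apply] using congrFun₂ h (a, b) (b, a)
  exact eq_zero_of_sum_smul_mul_star_self_eq_zero hp hentry i hi

end StarOrderedRing

/-- If a positively weighted sum of Kronecker products `E i ⊗ₖ (E i)ᴴ` vanishes,
then every `E i` vanishes. -/
theorem eq_zero_of_sum_kronecker_conjTranspose_eq_zero {d : ℕ} {I : Type*} [Fintype I]
    (E : I → Matrix (Fin d) (Fin d) ℂ) (p : I → ℝ) (hp : ∀ i, 0 < p i)
    (h : ∑ i, p i • (E i ⊗ₖ (E i)ᴴ) = 0) :
    ∀ i, E i = 0 := by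
  open scoped ComplexOrder in
  exact fun i =>
    eq_zero_of_sum_kronecker_conjTranspose_eq_zero_general (fun j _ => hp j) h i (Finset.mem_univ i)
end

section
/- Let d ≥ 1 and n, m ≥ 0, and let t : Fin d → ℕ with ∑_i t(i) = n + m. Then, identifying Fin (n+m) → Fin d with pairs (u₁, u₂) where u₁ : Fin n → Fin d and u₂ : Fin m → Fin d via Fin.append, one has for all u₁, u₂: Sym_{n+m}(t)(append u₁ u₂) = ∑_{(r,s)} Sym_n(r)(u₁) · Sym_m(s)(u₂), where the sum runs over all pairs r, s : Fin d → ℕ with r + s = t, ∑_i r(i) = n and ∑_i s(i) = m. Equivalently, the non-normalized symmetric basis vector splits as Sym(t) = ∑_{r+s=t} Sym(r) ⊗ Sym(s). -/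
/-- The type of a tuple `u : Fin n → Fin d`: `typeOf u i` counts the occurrences of `i` in `u`. -/
def typeOf {n d : ℕ} (u : Fin n → Fin d) : Fin d → ℕ :=
  fun i => (Finset.univ.filter fun ℓ => u ℓ = i).card

/-- The non-normalized symmetric basis vector `Sym(t)` associated to a type `t`:
its entry at `u` is `1` if `u` has type `t` and `0` otherwise. -/
def symVec {d : ℕ} (n : ℕ) (t : Fin d → ℕ) : (Fin n → Fin d) → ℂ :=
  fun u => if typeOf u = t then 1 else 0

/-!
Types are additive under concatenation, so `Sym(t)` at a concatenation of `u₁` and `u₂` is the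
indicator of `T(u₁) + T(u₂) = t`. Such an indicator is the convolution over `r + s = t` of the
indicators of `T(u₁) = r` and `T(u₂) = s`. The terms with `∑ r ≠ n` vanish because the type of an
`n`-tuple sums to `n`.
-/

theorem sum_typeOf {n d : ℕ} (u : Fin n → Fin d) : ∑ i, typeOf u i = n := by
  simpa [typeOf] using (Finset.card_eq_sum_card_fiberwise (f := u) (s := Finset.univ)
    (t := Finset.univ) (by simp)).symm

theorem typeOf_append {n m d : ℕ} (u₁ : Fin n → Fin d) (u₂ : Fin m → Fin d) :
    typeOf (Fin.append u₁ u₂) = typeOf u₁ + typeOf u₂ := by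
  funext i
  simp only [typeOf, Finset.card_filter, Fin.sum_univ_add, Fin.append_left, Fin.append_right,
    Pi.add_apply]

theorem sum_Iic_ite_eq_mul_ite_eq_tsub {α R : Type*} [AddCommMonoid α] [PartialOrder α]
    [CanonicallyOrderedAdd α] [AddLeftReflectLE α] [Sub α] [OrderedSub α]
    [LocallyFiniteOrderBot α] [DecidableEq α] [NonAssocSemiring R] (a b t : α) :
    ∑ r ∈ Finset.Iic t, (if a = r then 1 else 0) * (if b = t - r then 1 else 0) =
      if a + b = t then (1 : R) else 0 := by
  have add_eq_iff : a ∈ Finset.Iic t ∧ b = t - a ↔ a + b = t := by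
    rw [Finset.mem_Iic]
    constructor
    · rintro ⟨hat, rfl⟩
      exact add_tsub_cancel_of_le hat
    · rintro rfl
      exact ⟨le_self_add, (add_tsub_cancel_left a b).symm⟩
  simp only [ite_mul, one_mul, zero_mul]
  rw [Finset.sum_ite_eq, ← ite_and]
  exact if_congr add_eq_iff rfl rfl

theorem symVec_append {n m d : ℕ} (t : Fin d → ℕ) (u₁ : Fin n → Fin d) (u₂ : Fin m → Fin d) :
    symVec (n + m) t (Fin.append u₁ u₂) =
      ∑ r ∈ Finset.Iic t, symVec n r u₁ * symVec m (t - r) u₂ := by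
  simp only [symVec, typeOf_append, sum_Iic_ite_eq_mul_ite_eq_tsub]

theorem symVec_eq_zero_of_sum_ne {n d : ℕ} {r : Fin d → ℕ} (hr : ∑ i, r i ≠ n)
    (u : Fin n → Fin d) : symVec n r u = 0 :=
  if_neg fun h : typeOf u = r => hr (h ▸ sum_typeOf u)

theorem piFinset_range_succ_eq_Iic {ι : Type*} [Fintype ι] [DecidableEq ι] (t : ι → ℕ) :
    Fintype.piFinset (fun i => Finset.range (t i + 1)) = Finset.Iic t := by
  ext r
  simp only [Fintype.mem_piFinset, Finset.mem_range_succ_iff, Finset.mem_Iic, Pi.le_def]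

/-- Splitting of a non-normalized symmetric basis vector into two parts:
`Sym(t) = ∑_{r+s=t} Sym(r) ⊗ Sym(s)`, where the sum runs over all decompositions
`r + s = t` with `∑ r = n` and `∑ s = m` (parametrized by `r ≤ t`, `s := t - r`). -/
theorem symVec_split {d : ℕ} (hd : 1 ≤ d) (n m : ℕ) (t : Fin d → ℕ) (ht : ∑ i, t i = n + m)
    (u₁ : Fin n → Fin d) (u₂ : Fin m → Fin d) :
    symVec (n + m) t (Fin.append u₁ u₂) =
      ∑ r ∈ Fintype.piFinset (fun i => Finset.range (t i + 1)),
        if ∑ i, r i = n then symVec n r u₁ * symVec m (t - r) u₂ else 0 := by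
  rw [symVec_append, piFinset_range_succ_eq_Iic]
  refine Finset.sum_congr rfl fun r _ => ?_
  split_ifs with hr
  · rfl
  · rw [symVec_eq_zero_of_sum_ne hr, zero_mul]
end

section
/- Let A be a finite type, and let E : A → Matrix (Fin d) (Fin d) ℂ be a POVM: each E(a) is positive semidefinite and ∑_{a∈A} E(a) = 1. Suppose that for each a ∈ A there exists a density matrix ρ(a) (positive semidefinite with trace 1) such that trace(ρ(a) · E(a)) = 1. Then Fintype.card A ≤ d. In other words, a set of states that can be perfectly discriminated by a single POVM on ℂ^d has at most d elements. -/
open scoped ComplexOrder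

/-!
The eigenvalues of a density matrix `ρ` are nonnegative and sum to `1`, so `ρ ≤ 1` in the Loewner
order, and hence `tr (ρ E) ≤ tr E` for every positive semidefinite `E`. An effect that detects some
state with certainty therefore has trace at least `1`, while the effects of a POVM on `ℂ^d` have
traces summing to `tr 1 = d`.
-/

section PerfectDiscrimination

open scoped MatrixOrder

variable {n 𝕜 : Type*} [Fintype n] [RCLike 𝕜]

theorem posSemidef_le_trace_smul_one [DecidableEq n] {P : Matrix n n 𝕜} (hP : P.PosSemidef) :
    P ≤ P.trace • 1 := by
  have eigenvalue_le_sum (i : n) :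
      hP.isHermitian.eigenvalues i ≤ ∑ j, hP.isHermitian.eigenvalues j :=
    Finset.single_le_sum (fun j _ => hP.eigenvalues_nonneg j) (Finset.mem_univ i)
  have le_sum : P ≤ algebraMap ℝ (Matrix n n 𝕜) (∑ j, hP.isHermitian.eigenvalues j) := by
    refine le_algebraMap_of_spectrum_le (fun x hx => ?_) hP.isHermitian
    obtain ⟨i, rfl⟩ := hP.isHermitian.spectrum_real_eq_range_eigenvalues ▸ hx
    exact eigenvalue_le_sum i
  rwa [Algebra.algebraMap_eq_smul_one, RCLike.real_smul_eq_coe_smul (K := 𝕜), RCLike.ofReal_sum,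
    ← hP.isHermitian.trace_eq_sum_eigenvalues] at le_sum

theorem trace_mul_nonneg_of_posSemidef {P Q : Matrix n n 𝕜} (hP : P.PosSemidef)
    (hQ : Q.PosSemidef) : 0 ≤ (P * Q).trace := by
  classical
  obtain ⟨B, rfl⟩ := CStarAlgebra.nonneg_iff_eq_star_mul_self.mp hP.nonneg
  rw [mul_assoc, Matrix.trace_mul_comm]
  exact (hQ.mul_mul_conjTranspose_same B).trace_nonneg

theorem trace_mul_le_trace_mul_trace_of_posSemidef {P Q : Matrix n n 𝕜} (hP : P.PosSemidef)
    (hQ : Q.PosSemidef) : (P * Q).trace ≤ P.trace * Q.trace := by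
  classical
  have gap_nonneg : 0 ≤ ((P.trace • 1 - P) * Q).trace :=
    trace_mul_nonneg_of_posSemidef (posSemidef_le_trace_smul_one hP) hQ
  simpa only [sub_mul, smul_mul_assoc, one_mul, Matrix.trace_sub, Matrix.trace_smul, smul_eq_mul,
    sub_nonneg] using gap_nonneg

variable {A : Type*} [Fintype A]

theorem sum_trace_mul_le_trace_sum {ρ E : A → Matrix n n 𝕜} (hρ : ∀ a, (ρ a).PosSemidef)
    (hρ_trace : ∀ a, (ρ a).trace = 1) (hE : ∀ a, (E a).PosSemidef) :
    ∑ a, (ρ a * E a).trace ≤ (∑ a, E a).trace := by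
  rw [Matrix.trace_sum]
  gcongr with a
  simpa only [hρ_trace, one_mul] using
    trace_mul_le_trace_mul_trace_of_posSemidef (hρ a) (hE a)

theorem card_le_of_perfect_discrimination_general {ρ E : A → Matrix n n 𝕜}
    (hρ : ∀ a, (ρ a).PosSemidef) (hρ_trace : ∀ a, (ρ a).trace = 1) (hE : ∀ a, (E a).PosSemidef)
    (hρE : ∀ a, (ρ a * E a).trace = 1) : (Fintype.card A : 𝕜) ≤ (∑ a, E a).trace := by
  simpa [hρE] using sum_trace_mul_le_trace_sum hρ hρ_trace hE

end PerfectDiscrimination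

/-- A set of states that can be perfectly discriminated by a single POVM on `ℂ^d`
has at most `d` elements. -/
theorem card_le_of_perfect_discrimination {d : ℕ} {A : Type*} [Fintype A]
    (E : A → Matrix (Fin d) (Fin d) ℂ) (hE : ∀ a, (E a).PosSemidef)
    (hEsum : ∑ a, E a = 1)
    (h : ∀ a, ∃ ρ : Matrix (Fin d) (Fin d) ℂ,
      ρ.PosSemidef ∧ ρ.trace = 1 ∧ (ρ * E a).trace = 1) :
    Fintype.card A ≤ d := by
  choose ρ hρ hρ_trace hρE using h
  simpa [hEsum] using card_le_of_perfect_discrimination_general hρ hρ_trace hE hρE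
end

section
/- Let n ≥ 1 and let {ν_r}_{r∈R} be a finite family of pairwise disjoint subsets of Fin n; set θ := ⋃_r (ν_r × ν_r). Let F ∈ Matrix (Fin n) (Fin n) ℂ be Hermitian with F_{ij} = 0 whenever (i,j) ∉ θ, and let (C_k, b_k)_{k∈K} be a finite family of constraints such that for each k, either C_k is supported on θ (C_k has zero entries off θ), or C_k is supported on the complement of θ and b_k = 0. Then for every positive semidefinite X ∈ Matrix (Fin n) (Fin n) ℂ satisfying trace(C_k* · X) = b_k for all k, the matrix X' defined by X'_{ij} = X_{ij} for (i,j) ∈ θ and X'_{ij} = 0 otherwise is positive semidefinite, satisfies trace(C_k* · X') = b_k for all k ∈ K, and has the same objective value trace(F* · X') = trace(F* · X). Consequently the semidefinite program restricted to matrices supported on θ has the same optimal value as the full program. -/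
open scoped ComplexOrder
open Matrix

/-!
Restriction to `θ` is self-adjoint for the Hilbert–Schmidt inner product, so `X` and its
restriction pair alike with any matrix supported on `θ`, while the restriction pairs to zero with
any matrix supported off `θ`. For disjoint blocks the restriction of `X` is `∑ r, P r * X * P r`,
where `P r` is the coordinate projection onto the `r`-th block, and congruence preserves positive
semidefiniteness.
-/

section EntryRestriction

variable {m n ι R : Type*}

/-- The restriction of a matrix `A` to a set `θ` of positions: entries off `θ` are replaced by zero.
For `θ = ⋃ r, ν r ×ˢ ν r` with disjoint blocks `ν r` this is the pinching of `A` to the blocks. -/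
noncomputable def entryRestriction [Zero R] (θ : Set (m × n)) (A : Matrix m n R) : Matrix m n R :=
  of fun i j => θ.indicator (fun p => A p.1 p.2) (i, j)

theorem entryRestriction_apply [Zero R] (θ : Set (m × n)) [DecidablePred (· ∈ θ)]
    (A : Matrix m n R) (i : m) (j : n) :
    entryRestriction θ A i j = if (i, j) ∈ θ then A i j else 0 := by
  simp only [entryRestriction, of_apply, Set.indicator_apply]

theorem entryRestriction_eq_self_iff [Zero R] {θ : Set (m × n)} {A : Matrix m n R} :
    entryRestriction θ A = A ↔ ∀ i j, (i, j) ∉ θ → A i j = 0 := by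
  classical
  simp only [← Matrix.ext_iff, entryRestriction_apply, ite_eq_left_iff, eq_comm (a := (0 : R))]

theorem entryRestriction_eq_zero_iff [Zero R] {θ : Set (m × n)} {A : Matrix m n R} :
    entryRestriction θ A = 0 ↔ ∀ i j, (i, j) ∈ θ → A i j = 0 := by
  classical
  simp only [← Matrix.ext_iff, entryRestriction_apply, Matrix.zero_apply, ite_eq_right_iff]

theorem entryRestriction_biUnion [AddCommMonoid R] (t : Finset ι) {θ : ι → Set (m × n)}
    (hθ : (t : Set ι).PairwiseDisjoint θ) (A : Matrix m n R) :
    entryRestriction (⋃ r ∈ t, θ r) A = ∑ r ∈ t, entryRestriction (θ r) A := by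
  ext i j
  rw [Matrix.sum_apply]
  exact Finset.indicator_biUnion_apply t θ hθ (f := fun p => A p.1 p.2) (i, j)

theorem entryRestriction_prod [Fintype m] [Fintype n] [DecidableEq m] [DecidableEq n]
    [NonAssocSemiring R] (s : Set m) (t : Set n) (A : Matrix m n R) :
    entryRestriction (s ×ˢ t) A =
      diagonal (s.indicator (1 : m → R)) * A * diagonal (t.indicator (1 : n → R)) := by
  classical
  ext i j
  by_cases hi : i ∈ s <;> by_cases hj : j ∈ t <;> simp [entryRestriction_apply, hi, hj]

theorem trace_conjTranspose_mul_entryRestriction [Fintype m] [Fintype n]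
    [NonUnitalNonAssocSemiring R] [StarAddMonoid R] (θ : Set (m × n)) (A B : Matrix m n R) :
    (Aᴴ * entryRestriction θ B).trace = ((entryRestriction θ A)ᴴ * B).trace := by
  classical
  simp only [trace, diag_apply, mul_apply, conjTranspose_apply, entryRestriction_apply, mul_ite,
    mul_zero, apply_ite star, star_zero, ite_mul, zero_mul]

section PosSemidef

variable [Finite m] [Ring R] [PartialOrder R] [StarRing R] {X : Matrix m m R}

theorem posSemidef_entryRestriction_prod_self (hX : X.PosSemidef) (s : Set m) :
    (entryRestriction (s ×ˢ s) X).PosSemidef := by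
  classical
  cases nonempty_fintype m
  have hstar : star (s.indicator (1 : m → R)) = s.indicator 1 := by
    ext i
    by_cases hi : i ∈ s <;> simp [hi]
  simpa only [diagonal_conjTranspose, hstar, ← entryRestriction_prod] using
    hX.conjTranspose_mul_mul_same (diagonal (s.indicator 1))

theorem posSemidef_entryRestriction_iUnion_prod_self [AddLeftMono R] (hX : X.PosSemidef)
    {ν : ι → Set m} (hν : Pairwise fun r r' => Disjoint (ν r) (ν r')) :
    (entryRestriction (⋃ r, ν r ×ˢ ν r) X).PosSemidef := by
  -- As `m` is finite there are finitely many distinct blocks, even when `ι` is infinite.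
  have hfin : (Set.range ν).Finite := Set.toFinite _
  have hunion : ⋃ r, ν r ×ˢ ν r = ⋃ s ∈ hfin.toFinset, s ×ˢ s := by
    simp only [Set.Finite.mem_toFinset, Set.biUnion_range]
  have hdisj : (hfin.toFinset : Set (Set m)).PairwiseDisjoint fun s => s ×ˢ s := by
    rw [hfin.coe_toFinset]
    exact hν.range_pairwise.mono' fun s t hst => Set.disjoint_prod.mpr (.inl hst)
  rw [hunion, entryRestriction_biUnion _ hdisj]
  exact posSemidef_sum _ fun s _ => posSemidef_entryRestriction_prod_self hX s

end PosSemidef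

end EntryRestriction

theorem sparse_sdp_exact_general {m ι κ R : Type*} [Fintype m] [Ring R] [PartialOrder R]
    [StarRing R] [AddLeftMono R] {ν : ι → Set m}
    (hν : Pairwise fun r r' => Disjoint (ν r) (ν r'))
    {θ : Set (m × m)} (hθ : θ = ⋃ r, ν r ×ˢ ν r)
    {F : Matrix m m R} (hF : ∀ i j, (i, j) ∉ θ → F i j = 0)
    {C : κ → Matrix m m R} {b : κ → R}
    (hC : ∀ k, (∀ i j, (i, j) ∉ θ → C k i j = 0) ∨
      ((∀ i j, (i, j) ∈ θ → C k i j = 0) ∧ b k = 0))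
    {X : Matrix m m R} (hX : X.PosSemidef) (hXfeas : ∀ k, ((C k)ᴴ * X).trace = b k) :
    (entryRestriction θ X).PosSemidef ∧
      (∀ k, ((C k)ᴴ * entryRestriction θ X).trace = b k) ∧
      (Fᴴ * entryRestriction θ X).trace = (Fᴴ * X).trace := by
  simp only [trace_conjTranspose_mul_entryRestriction]
  refine ⟨?_, fun k => ?_, ?_⟩
  · rw [hθ]
    exact posSemidef_entryRestriction_iUnion_prod_self hX hν
  · obtain hon | ⟨hoff, hb⟩ := hC k
    · rw [entryRestriction_eq_self_iff.mpr hon, hXfeas]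
    · rw [entryRestriction_eq_zero_iff.mpr hoff, conjTranspose_zero, zero_mul, trace_zero, hb]
  · rw [entryRestriction_eq_self_iff.mpr hF]

/-- Exactness of the sparse SDP implementation: if the objective `F` is supported on a union
`θ` of disjoint diagonal blocks, and every constraint is either supported on `θ` or supported
off `θ` with homogeneous right-hand side, then pinching any feasible `X` to `θ` preserves
positive semidefiniteness, feasibility, and the objective value. -/
theorem sparse_sdp_exact {n : ℕ} (hn : 1 ≤ n) {R : Type*} [Fintype R] [DecidableEq R]
    (ν : R → Finset (Fin n)) (hdisj : ∀ r r', r ≠ r' → Disjoint (ν r) (ν r'))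
    (θ : Finset (Fin n × Fin n)) (hθ : θ = Finset.univ.biUnion fun r => ν r ×ˢ ν r)
    (F : Matrix (Fin n) (Fin n) ℂ) (hF : F.IsHermitian)
    (hFsupp : ∀ i j, (i, j) ∉ θ → F i j = 0)
    {K : Type*} [Fintype K] (C : K → Matrix (Fin n) (Fin n) ℂ) (b : K → ℂ)
    (hC : ∀ k, (∀ i j, (i, j) ∉ θ → C k i j = 0) ∨
      ((∀ i j, (i, j) ∈ θ → C k i j = 0) ∧ b k = 0))
    (X : Matrix (Fin n) (Fin n) ℂ) (hX : X.PosSemidef)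
    (hXfeas : ∀ k, ((C k)ᴴ * X).trace = b k)
    (X' : Matrix (Fin n) (Fin n) ℂ)
    (hX' : ∀ i j, X' i j = if (i, j) ∈ θ then X i j else 0) :
    X'.PosSemidef ∧ (∀ k, ((C k)ᴴ * X').trace = b k) ∧ (Fᴴ * X').trace = (Fᴴ * X).trace := by
  obtain rfl : X' = entryRestriction (θ : Set (Fin n × Fin n)) X :=
    Matrix.ext fun i j => (hX' i j).trans (entryRestriction_apply _ X i j).symm
  exact sparse_sdp_exact_general (fun r r' h => Finset.disjoint_coe.mpr (hdisj r r' h))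
    (by simp [hθ]) hFsupp hC hX hXfeas
end

section
/- Let d ≥ 1 and N ≥ 2, and let Φ ∈ Matrix (Fin N → Fin d × Fin d) (Fin N → Fin d × Fin d) ℂ be positive semidefinite with trace 1, invariant under simultaneous index permutations (Φ_{v∘σ, v'∘σ} = Φ_{v,v'} for all permutations σ of Fin N), and satisfying the first-party trace-preservation constraint: for all j, j' ∈ Fin d and all w, w' : Fin (N−1) → Fin d × Fin d, ∑_{o} Φ_{(cons(j,o) w),(cons(j',o) w')} = (δ_{j,j'}/d) · ∑_{j'', o} Φ_{(cons(j'',o) w),(cons(j'',o) w')}. Then the partial trace of Φ over the last party, Φ'_{w,w'} := ∑_{x ∈ Fin d × Fin d} Φ_{(snoc w x),(snoc w' x)} (w, w' : Fin (N−1) → Fin d × Fin d), is positive semidefinite, has trace 1, is invariant under simultaneous index permutations of Fin (N−1), and satisfies the same first-party trace-preservation constraint. Consequently every feasible point of the level-(N) relaxation yields a feasible point of the level-(N−1) relaxation with the same value on any objective supported on the first N−1 parties, so the SDP bounds ω̃^{a,N}_{d_E} are non-increasing in N. -/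
open scoped ComplexOrder

section PartialTrace

variable {α R : Type*} {n : ℕ}

/-- The partial trace over the last of `n + 1` parties, each with basis `α`. -/
def partialTraceLast [Fintype α] [AddCommMonoid R]
    (Φ : Matrix (Fin (n + 1) → α) (Fin (n + 1) → α) R) : Matrix (Fin n → α) (Fin n → α) R :=
  Matrix.of fun w w' => ∑ x : α, Φ (Fin.snoc w x) (Fin.snoc w' x)

theorem partialTraceLast_eq_sum_submatrix [Fintype α] [AddCommMonoid R]
    (Φ : Matrix (Fin (n + 1) → α) (Fin (n + 1) → α) R) :
    partialTraceLast Φ = ∑ x : α, Φ.submatrix (Fin.snoc · x) (Fin.snoc · x) := by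
  ext w w'
  simp [partialTraceLast, Matrix.sum_apply]

theorem posSemidef_partialTraceLast [Fintype α] [Ring R] [PartialOrder R] [StarRing R]
    [AddLeftMono R] {Φ : Matrix (Fin (n + 1) → α) (Fin (n + 1) → α) R} (hΦ : Φ.PosSemidef) :
    (partialTraceLast Φ).PosSemidef := by
  rw [partialTraceLast_eq_sum_submatrix]
  exact Matrix.posSemidef_sum _ fun x _ => hΦ.submatrix _

theorem trace_partialTraceLast [Fintype α] [AddCommMonoid R]
    (Φ : Matrix (Fin (n + 1) → α) (Fin (n + 1) → α) R) :
    (partialTraceLast Φ).trace = Φ.trace :=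
  calc (partialTraceLast Φ).trace
      = ∑ x : α, ∑ w : Fin n → α, Φ (Fin.snoc w x) (Fin.snoc w x) := Finset.sum_comm
    _ = ∑ p : α × (Fin n → α), Φ (Fin.snoc p.2 p.1) (Fin.snoc p.2 p.1) :=
        (Fintype.sum_prod_type fun p => Φ (Fin.snoc p.2 p.1) (Fin.snoc p.2 p.1)).symm
    _ = Φ.trace := (Fin.snocEquiv fun _ : Fin (n + 1) => α).sum_comp fun v => Φ v v

theorem partialTraceLast_cons [Fintype α] [AddCommMonoid R]
    (Φ : Matrix (Fin (n + 2) → α) (Fin (n + 2) → α) R) (a b : α) (w w' : Fin n → α) :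
    partialTraceLast Φ (Fin.cons a w) (Fin.cons b w') =
      ∑ x : α, Φ (Fin.cons a (Fin.snoc w x)) (Fin.cons b (Fin.snoc w' x)) := by
  simp only [partialTraceLast, Matrix.of_apply, Fin.cons_snoc_eq_snoc_cons]

/-- Invariance of an `n`-party matrix under simultaneous permutations of the parties in the row
and column indices. -/
def IsPermInvariant (Φ : Matrix (Fin n → α) (Fin n → α) R) : Prop :=
  ∀ (σ : Equiv.Perm (Fin n)) (v v' : Fin n → α), Φ (v ∘ σ) (v' ∘ σ) = Φ v v'

theorem snoc_comp_viaEmbedding_castSuccEmb (σ : Equiv.Perm (Fin n)) (w : Fin n → α) (x : α) :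
    (Fin.snoc w x : Fin (n + 1) → α) ∘ σ.viaEmbedding Fin.castSuccEmb =
      Fin.snoc (w ∘ σ) x := by
  funext i
  cases i using Fin.lastCases with
  | last =>
    have hlast : σ.viaEmbedding Fin.castSuccEmb (Fin.last n) = Fin.last n :=
      σ.viaEmbedding_apply_of_notMem _ _ (by simp)
    simp [hlast]
  | cast i =>
    have hcast : σ.viaEmbedding Fin.castSuccEmb i.castSucc = (σ i).castSucc :=
      σ.viaEmbedding_apply _ i
    simp [hcast]

theorem IsPermInvariant.partialTraceLast [Fintype α] [AddCommMonoid R]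
    {Φ : Matrix (Fin (n + 1) → α) (Fin (n + 1) → α) R} (hΦ : IsPermInvariant Φ) :
    IsPermInvariant (partialTraceLast Φ) := fun σ w w' =>
  Finset.sum_congr rfl fun x _ => by
    rw [← snoc_comp_viaEmbedding_castSuccEmb, ← snoc_comp_viaEmbedding_castSuccEmb, hΦ]

end PartialTrace

section InputMarginal

variable {I O R : Type*} [Fintype I] [Fintype O] {n : ℕ}

/-- The first-party constraint that tracing out the output `O` of party `0` leaves
`ρ` on its input `I`, in tensor product with the partial trace over all of party `0`.
Trace preservation is the case where `ρ` is the maximally mixed state. -/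
def HasFirstInputMarginal [NonUnitalNonAssocSemiring R] (ρ : Matrix I I R)
    (Φ : Matrix (Fin (n + 1) → I × O) (Fin (n + 1) → I × O) R) : Prop :=
  ∀ (j j' : I) (w w' : Fin n → I × O),
    ∑ o : O, Φ (Fin.cons (j, o) w) (Fin.cons (j', o) w') =
      ρ j j' * ∑ j'' : I, ∑ o : O, Φ (Fin.cons (j'', o) w) (Fin.cons (j'', o) w')

theorem HasFirstInputMarginal.partialTraceLast [NonUnitalNonAssocSemiring R] {ρ : Matrix I I R}
    {Φ : Matrix (Fin (n + 2) → I × O) (Fin (n + 2) → I × O) R}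
    (hΦ : HasFirstInputMarginal ρ Φ) : HasFirstInputMarginal ρ (partialTraceLast Φ) := by
  intro j j' w w'
  simp only [partialTraceLast_cons]
  calc ∑ o : O, ∑ x, Φ (Fin.cons (j, o) (Fin.snoc w x)) (Fin.cons (j', o) (Fin.snoc w' x))
      = ∑ x, ∑ o : O, Φ (Fin.cons (j, o) (Fin.snoc w x)) (Fin.cons (j', o) (Fin.snoc w' x)) :=
        Finset.sum_comm
    _ = ∑ x, ρ j j' * ∑ j'' : I, ∑ o : O,
          Φ (Fin.cons (j'', o) (Fin.snoc w x)) (Fin.cons (j'', o) (Fin.snoc w' x)) :=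
        Finset.sum_congr rfl fun x _ => hΦ j j' (Fin.snoc w x) (Fin.snoc w' x)
    _ = ρ j j' * ∑ j'' : I, ∑ o : O, ∑ x,
          Φ (Fin.cons (j'', o) (Fin.snoc w x)) (Fin.cons (j'', o) (Fin.snoc w' x)) := by
        rw [← Finset.mul_sum, Finset.sum_comm]
        exact congrArg _ (Finset.sum_congr rfl fun j'' _ => Finset.sum_comm)

theorem partial_trace_feasible_general [Ring R] [PartialOrder R] [StarRing R] [AddLeftMono R]
    {ρ : Matrix I I R} {Φ : Matrix (Fin (n + 2) → I × O) (Fin (n + 2) → I × O) R}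
    (hpsd : Φ.PosSemidef) (htr : Φ.trace = 1) (hperm : IsPermInvariant Φ)
    (hmarg : HasFirstInputMarginal ρ Φ) :
    (partialTraceLast Φ).PosSemidef ∧ (partialTraceLast Φ).trace = 1 ∧
      IsPermInvariant (partialTraceLast Φ) ∧ HasFirstInputMarginal ρ (partialTraceLast Φ) :=
  ⟨posSemidef_partialTraceLast hpsd, (trace_partialTraceLast Φ).trans htr,
    hperm.partialTraceLast, hmarg.partialTraceLast⟩

end InputMarginal

/-- Tracing out the last party of a feasible point of the level-`N` SDP relaxation
(`N = k + 2`) yields a feasible point of the level-`(N-1)` relaxation: the partial trace is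
positive semidefinite, has unit trace, is invariant under simultaneous index permutations,
and satisfies the same first-party trace-preservation constraint. Hence the SDP bounds are
non-increasing in `N`. -/
theorem partial_trace_feasible {d : ℕ} (hd : 1 ≤ d) (k : ℕ)
    (Φ : Matrix (Fin (k + 2) → Fin d × Fin d) (Fin (k + 2) → Fin d × Fin d) ℂ)
    (hpsd : Φ.PosSemidef) (htr : Φ.trace = 1)
    (hperm : ∀ (σ : Equiv.Perm (Fin (k + 2))) (v v' : Fin (k + 2) → Fin d × Fin d),
      Φ (v ∘ σ) (v' ∘ σ) = Φ v v')
    (hTP : ∀ (j j' : Fin d) (w w' : Fin (k + 1) → Fin d × Fin d),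
      ∑ o : Fin d, Φ (Fin.cons (j, o) w) (Fin.cons (j', o) w') =
        (if j = j' then 1 else 0) / (d : ℂ) *
          ∑ j'' : Fin d, ∑ o : Fin d, Φ (Fin.cons (j'', o) w) (Fin.cons (j'', o) w'))
    (Φ' : Matrix (Fin (k + 1) → Fin d × Fin d) (Fin (k + 1) → Fin d × Fin d) ℂ)
    (hΦ' : ∀ w w', Φ' w w' = ∑ x : Fin d × Fin d, Φ (Fin.snoc w x) (Fin.snoc w' x)) :
    Φ'.PosSemidef ∧ Φ'.trace = 1 ∧
      (∀ (σ : Equiv.Perm (Fin (k + 1))) (w w' : Fin (k + 1) → Fin d × Fin d),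
        Φ' (w ∘ σ) (w' ∘ σ) = Φ' w w') ∧
      (∀ (j j' : Fin d) (w w' : Fin k → Fin d × Fin d),
        ∑ o : Fin d, Φ' (Fin.cons (j, o) w) (Fin.cons (j', o) w') =
          (if j = j' then 1 else 0) / (d : ℂ) *
            ∑ j'' : Fin d, ∑ o : Fin d, Φ' (Fin.cons (j'', o) w) (Fin.cons (j'', o) w')) := by
  obtain rfl : Φ' = partialTraceLast Φ := Matrix.ext hΦ'
  exact partial_trace_feasible_general (ρ := .of fun j j' => (if j = j' then 1 else 0) / (d : ℂ))
    hpsd htr hperm hTP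
end
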